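/- arXiv:2602.22081 — 3 statements merged into one kernel-verified Lean document; each statement's English description precedes it below -/
import Mathlib

section
/- Let M, L, w be positive integers with M < w and w ≥ 2. If every prime factor of L is at least 2w - 1, then every AM-OPPTS MC-CAC of length L and weight w in M channels has at most M(M-1)(L-1)/((2w-M)(w-1)) + M(L-1)/(2w-2) codewords. -/
/-- The set of time slots used by codeword `S` on channel `i`. -/
def chan {M L : ℕ} (S : Finset (Fin M × ZMod L)) (i : Fin M) : Finset (ZMod L) :=
  (S.filter fun p => p.1 = i).image Prod.snd

/-- The `(i,j)` set of differences of a codeword `S ⊆ {1,…,M} × Z_L`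
(with `0` removed when `i = j`). -/
def Darr {M L : ℕ} (S : Finset (Fin M × ZMod L)) (i j : Fin M) : Finset (ZMod L) :=
  if i = j then (((chan S i) ×ˢ (chan S j)).image fun p => p.1 - p.2).erase 0
  else ((chan S i) ×ˢ (chan S j)).image fun p => p.1 - p.2

/-- A multichannel conflict-avoiding code of length `L` and weight `w` in `M` channels. -/
def IsMCCAC (M L w : ℕ) (C : Finset (Finset (Fin M × ZMod L))) : Prop :=
  (∀ S ∈ C, S.card = w) ∧
  ∀ S ∈ C, ∀ S' ∈ C, S ≠ S' → ∀ i j : Fin M, Disjoint (Darr S i j) (Darr S' i j)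

/-- An MC-CAC with the at most one-packet per time slot (AM-OPPTS) property. -/
def IsAMOPPTSMCCAC (M L w : ℕ) (C : Finset (Finset (Fin M × ZMod L))) : Prop :=
  IsMCCAC M L w C ∧
  ∀ S ∈ C, ∀ t : ZMod L, ∀ i j : Fin M, (i, t) ∈ S → (j, t) ∈ S → i = j

/-!
If every prime factor of `L` is at least `2w - 1`, the Cauchy–Davenport inequality holds in `ZMod L`
without loss for sets of size at most `w`. Hence a codeword of weight `w` occupying `k` channels has
at least `∑ (|Sᵢ| + |Sⱼ| - 1) = (k - 1)(2w - k)` differences between distinct channels and at least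
`∑ 2(|Sᵢ| - 1) = 2(w - k)` differences within channels. As `k ≤ M`, counting the former with weight
`1 / ((2w - M)(w - 1))` and the latter with weight `1 / (2w - 2)` gives each codeword a total of at
least `(k - 1)/(w - 1) + (w - k)/(w - 1) = 1`. By the AM-OPPTS property `0` is never a difference,
so for each pair of channels the difference sets of the codewords pack into `L - 1` elements.
-/

open Finset
open scoped Pointwise

section General

theorem le_minOrder_of_forall_prime_dvd_natCard {G : Type*} [AddGroup G] {n : ℕ}
    (h : ∀ p : ℕ, p.Prime → p ∣ Nat.card G → n ≤ p) : (n : ℕ∞) ≤ AddMonoid.minOrder G := by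
  refine AddMonoid.le_minOrder.2 fun a ha hfin ↦ ?_
  have hne : addOrderOf a ≠ 1 := mt AddMonoid.addOrderOf_eq_one_iff.1 ha
  have hdvd : (addOrderOf a).minFac ∣ Nat.card G :=
    (Nat.minFac_dvd _).trans (addOrderOf_dvd_natCard a)
  exact_mod_cast (h _ (Nat.minFac_prime hne) hdvd).trans (Nat.minFac_le hfin.addOrderOf_pos)

theorem card_add_card_le_card_sub_add_one {G : Type*} [AddGroup G] [DecidableEq G]
    {s t : Finset G} (hs : s.Nonempty) (ht : t.Nonempty)
    (hst : ((#s + #t - 1 : ℕ) : ℕ∞) ≤ AddMonoid.minOrder G) : #s + #t ≤ #(s - t) + 1 := by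
  have hcd := cauchy_davenport_minOrder_add hs ht.neg
  rw [card_neg, min_eq_right hst, ← sub_eq_add_neg, Nat.cast_le] at hcd
  exact Nat.sub_le_iff_le_add.1 hcd

theorem sum_offDiag_eq_sum_sum_sub {ι A : Type*} [AddCommGroup A] (s : Finset ι) (f : ι × ι → A) :
    ∑ p ∈ s.offDiag, f p = ∑ i ∈ s, ∑ j ∈ s, f (i, j) - ∑ i ∈ s, f (i, i) := by
  classical
  rw [eq_sub_iff_add_eq', ← sum_diag, ← sum_union s.disjoint_diag_offDiag, diag_union_offDiag,
    sum_product]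

theorem sum_offDiag_add_sub_one {ι R : Type*} [CommRing R] (s : Finset ι) (f : ι → R) :
    ∑ p ∈ s.offDiag, (f p.1 + f p.2 - 1) = (#s - 1) * (2 * ∑ i ∈ s, f i - #s) := by
  rw [sum_offDiag_eq_sum_sum_sub]
  simp only [sum_sub_distrib, sum_add_distrib, sum_const, nsmul_eq_mul, ← mul_sum, mul_one]
  ring

theorem sum_card_le_card_sub_one_of_zero_notMem {ι G : Type*} [Fintype G] [Zero G]
    {s : Finset ι} {D : ι → Finset G} (hdisj : (s : Set ι).PairwiseDisjoint D)
    (hzero : ∀ x ∈ s, 0 ∉ D x) : ∑ x ∈ s, #(D x) ≤ Fintype.card G - 1 := by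
  classical
  have hsub : s.biUnion D ⊆ univ.erase 0 :=
    biUnion_subset.2 fun x hx ↦ subset_erase.2 ⟨subset_univ _, hzero x hx⟩
  calc ∑ x ∈ s, #(D x) = #(s.biUnion D) := (card_biUnion hdisj).symm
    _ ≤ #(univ.erase (0 : G)) := card_le_card hsub
    _ = Fintype.card G - 1 := by rw [card_erase_of_mem (mem_univ _), card_univ]

end General

section Codeword

variable {M L : ℕ} (S : Finset (Fin M × ZMod L))

/-- The channels on which the codeword `S` sends at least one packet. -/
def activeChannels : Finset (Fin M) := S.image Prod.fst

/-- The number of differences of `S` between two distinct channels, counted once for each ordered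
pair of channels in whose difference set they occur. -/
def crossDiffCount : ℕ := ∑ p ∈ univ.offDiag, #(Darr S p.1 p.2)

/-- The number of nonzero differences of `S` within a single channel, counted once for each channel
in which they occur. -/
def selfDiffCount : ℕ := ∑ i, #(Darr S i i)

variable {S}

theorem mem_chan {i : Fin M} {t : ZMod L} : t ∈ chan S i ↔ (i, t) ∈ S := by
  simp [chan]

theorem chan_nonempty_iff {i : Fin M} : (chan S i).Nonempty ↔ i ∈ activeChannels S := by
  simp [Finset.Nonempty, mem_chan, activeChannels]

theorem Darr_self (i : Fin M) : Darr S i i = (chan S i - chan S i).erase 0 := by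
  rw [Darr, if_pos rfl, image_sub_product]

theorem Darr_of_ne {i j : Fin M} (hij : i ≠ j) : Darr S i j = chan S i - chan S j := by
  rw [Darr, if_neg hij, image_sub_product]

theorem zero_notMem_Darr (hS : ∀ t : ZMod L, ∀ i j : Fin M, (i, t) ∈ S → (j, t) ∈ S → i = j)
    (i j : Fin M) : 0 ∉ Darr S i j := by
  obtain rfl | hij := eq_or_ne i j
  · rw [Darr_self]
    exact notMem_erase 0 _
  · rw [Darr_of_ne hij, zero_mem_sub_iff, not_not, disjoint_left]
    exact fun t hi hj ↦ hij (hS t i j (mem_chan.1 hi) (mem_chan.1 hj))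

theorem card_chan_eq_card_filter (i : Fin M) : #(chan S i) = #{p ∈ S | p.1 = i} := by
  refine card_image_of_injOn fun p hp q hq hpq ↦ Prod.ext ?_ hpq
  exact (mem_filter.1 hp).2.trans (mem_filter.1 hq).2.symm

theorem card_chan_le (i : Fin M) : #(chan S i) ≤ #S :=
  (card_chan_eq_card_filter i).trans_le (card_filter_le _ _)

theorem sum_card_chan_activeChannels : ∑ i ∈ activeChannels S, #(chan S i) = #S := by
  simp only [card_chan_eq_card_filter]
  exact (card_eq_sum_card_image Prod.fst S).symm

theorem card_chan_add_card_chan_le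
    (hmin : ((2 * #S - 1 : ℕ) : ℕ∞) ≤ AddMonoid.minOrder (ZMod L))
    {i j : Fin M} (hi : i ∈ activeChannels S) (hj : j ∈ activeChannels S) :
    #(chan S i) + #(chan S j) ≤ #(chan S i - chan S j) + 1 := by
  refine card_add_card_le_card_sub_add_one (chan_nonempty_iff.2 hi) (chan_nonempty_iff.2 hj)
    (le_trans ?_ hmin)
  have hi_le := card_chan_le (S := S) i
  have hj_le := card_chan_le (S := S) j
  exact_mod_cast (by lia : #(chan S i) + #(chan S j) - 1 ≤ 2 * #S - 1)

theorem two_mul_card_chan_le_card_Darr_self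
    (hmin : ((2 * #S - 1 : ℕ) : ℕ∞) ≤ AddMonoid.minOrder (ZMod L))
    {i : Fin M} (hi : i ∈ activeChannels S) :
    2 * #(chan S i) ≤ #(Darr S i i) + 2 := by
  have hsub := card_chan_add_card_chan_le hmin hi hi
  have herase := pred_card_le_card_erase (s := chan S i - chan S i) (a := 0)
  rw [Darr_self]
  lia

theorem le_crossDiffCount
    (hmin : ((2 * #S - 1 : ℕ) : ℕ∞) ≤ AddMonoid.minOrder (ZMod L)) :
    ((#(activeChannels S) : ℝ) - 1) * (2 * #S - #(activeChannels S)) ≤ crossDiffCount S := by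
  have hpair : ∀ p ∈ (activeChannels S).offDiag,
      (#(chan S p.1) + #(chan S p.2) - 1 : ℝ) ≤ #(Darr S p.1 p.2) := by
    intro p hp
    obtain ⟨hi, hj, hij⟩ := mem_offDiag.1 hp
    rw [Darr_of_ne hij, sub_le_iff_le_add]
    exact_mod_cast card_chan_add_card_chan_le hmin hi hj
  calc ((#(activeChannels S) : ℝ) - 1) * (2 * #S - #(activeChannels S))
      = ∑ p ∈ (activeChannels S).offDiag, (#(chan S p.1) + #(chan S p.2) - 1 : ℝ) := by
        rw [sum_offDiag_add_sub_one _ fun i ↦ (#(chan S i) : ℝ), ← sum_card_chan_activeChannels,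
          Nat.cast_sum]
    _ ≤ ∑ p ∈ (activeChannels S).offDiag, (#(Darr S p.1 p.2) : ℝ) := sum_le_sum hpair
    _ ≤ ∑ p ∈ univ.offDiag, (#(Darr S p.1 p.2) : ℝ) :=
        sum_le_sum_of_subset_of_nonneg (offDiag_mono (subset_univ _)) fun _ _ _ ↦ Nat.cast_nonneg _
    _ = crossDiffCount S := by rw [crossDiffCount, Nat.cast_sum]

theorem le_selfDiffCount
    (hmin : ((2 * #S - 1 : ℕ) : ℕ∞) ≤ AddMonoid.minOrder (ZMod L)) :
    2 * ((#S : ℝ) - #(activeChannels S)) ≤ selfDiffCount S := by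
  have hchan : ∀ i ∈ activeChannels S, 2 * (#(chan S i) : ℝ) - 2 ≤ #(Darr S i i) := by
    intro i hi
    rw [sub_le_iff_le_add]
    exact_mod_cast two_mul_card_chan_le_card_Darr_self hmin hi
  calc 2 * ((#S : ℝ) - #(activeChannels S))
      = ∑ i ∈ activeChannels S, (2 * (#(chan S i) : ℝ) - 2) := by
        rw [← sum_card_chan_activeChannels, sum_sub_distrib, ← mul_sum, sum_const, nsmul_eq_mul,
          Nat.cast_sum]
        ring
    _ ≤ ∑ i ∈ activeChannels S, (#(Darr S i i) : ℝ) := sum_le_sum hchan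
    _ ≤ ∑ i, (#(Darr S i i) : ℝ) :=
        sum_le_sum_of_subset_of_nonneg (subset_univ _) fun _ _ _ ↦ Nat.cast_nonneg _
    _ = selfDiffCount S := by rw [selfDiffCount, Nat.cast_sum]

theorem one_le_weighted_diffCount
    (hmin : ((2 * #S - 1 : ℕ) : ℕ∞) ≤ AddMonoid.minOrder (ZMod L))
    (hcard : 2 ≤ #S) (hM : M < 2 * #S) :
    (1 : ℝ) ≤ crossDiffCount S / ((2 * #S - M) * (#S - 1)) + selfDiffCount S / (2 * #S - 2) := by
  have hk_pos : 0 < #(activeChannels S) :=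
    card_pos.2 ((card_pos.1 (by lia : 0 < #S)).image Prod.fst)
  have hk_one : (1 : ℝ) ≤ #(activeChannels S) := by exact_mod_cast hk_pos
  have hk_le : (#(activeChannels S) : ℝ) ≤ M := by exact_mod_cast card_finset_fin_le _
  have hw : (0 : ℝ) < #S - 1 := sub_pos.2 (by exact_mod_cast hcard)
  have hwM : (0 : ℝ) < 2 * #S - M := sub_pos.2 (by exact_mod_cast hM)
  have hcross : (#(activeChannels S) - 1 : ℝ) / (#S - 1)
      ≤ crossDiffCount S / ((2 * #S - M) * (#S - 1)) := by
    rw [← mul_div_mul_left _ _ hwM.ne']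
    gcongr
    refine le_trans ?_ (le_crossDiffCount hmin)
    rw [mul_comm]
    gcongr
  have hself : (#S - #(activeChannels S) : ℝ) / (#S - 1) ≤ selfDiffCount S / (2 * #S - 2) := by
    rw [← mul_div_mul_left _ _ (two_ne_zero' ℝ), mul_sub_one]
    gcongr
    · linarith
    · exact le_selfDiffCount hmin
  calc (1 : ℝ) = (#(activeChannels S) - 1) / (#S - 1) + (#S - #(activeChannels S)) / (#S - 1) := by
        rw [← add_div, sub_add_sub_cancel', div_self hw.ne']
    _ ≤ _ := add_le_add hcross hself

end Codeword

namespace IsAMOPPTSMCCAC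

variable {M L w : ℕ} [NeZero L] {C : Finset (Finset (Fin M × ZMod L))}

theorem sum_card_Darr_le (hC : IsAMOPPTSMCCAC M L w C) (i j : Fin M) :
    (∑ S ∈ C, #(Darr S i j) : ℝ) ≤ L - 1 := by
  have hpack := sum_card_le_card_sub_one_of_zero_notMem (s := C) (D := fun S ↦ Darr S i j)
    (fun S hS S' hS' hne ↦ hC.1.2 S hS S' hS' hne i j)
    (fun S hS ↦ zero_notMem_Darr (hC.2 S hS) i j)
  rw [ZMod.card] at hpack
  rw [← Nat.cast_pred (NeZero.pos L)]
  exact_mod_cast hpack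

theorem sum_crossDiffCount_le (hC : IsAMOPPTSMCCAC M L w C) :
    (∑ S ∈ C, crossDiffCount S : ℝ) ≤ M * (M - 1) * (L - 1) := by
  simp only [crossDiffCount, Nat.cast_sum]
  rw [sum_comm]
  calc ∑ p ∈ univ.offDiag, ∑ S ∈ C, (#(Darr S p.1 p.2) : ℝ)
      ≤ ∑ p ∈ (univ : Finset (Fin M)).offDiag, ((L : ℝ) - 1) :=
        sum_le_sum fun p _ ↦ hC.sum_card_Darr_le p.1 p.2
    _ = M * (M - 1) * (L - 1) := by
        rw [sum_offDiag_eq_sum_sum_sub]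
        simp only [sum_const, card_univ, Fintype.card_fin, nsmul_eq_mul]
        ring

theorem sum_selfDiffCount_le (hC : IsAMOPPTSMCCAC M L w C) :
    (∑ S ∈ C, selfDiffCount S : ℝ) ≤ M * (L - 1) := by
  simp only [selfDiffCount, Nat.cast_sum]
  rw [sum_comm]
  calc ∑ i, ∑ S ∈ C, (#(Darr S i i) : ℝ) ≤ ∑ _i : Fin M, ((L : ℝ) - 1) :=
        sum_le_sum fun i _ ↦ hC.sum_card_Darr_le i i
    _ = M * (L - 1) := by rw [sum_const, card_univ, Fintype.card_fin, nsmul_eq_mul]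

end IsAMOPPTSMCCAC

theorem stmt_12_general {M L w : ℕ} (hw : 2 ≤ w) (hMw : M < 2 * w)
    (hprime : ∀ p : ℕ, p.Prime → p ∣ L → 2 * w - 1 ≤ p)
    {C : Finset (Finset (Fin M × ZMod L))} (hC : IsAMOPPTSMCCAC M L w C) :
    (#C : ℝ) ≤
      M * (M - 1) * (L - 1) / ((2 * w - M) * (w - 1)) + M * (L - 1) / (2 * w - 2) := by
  have hL : L ≠ 0 := by
    rintro rfl
    have := hprime 2 Nat.prime_two (dvd_zero 2)
    lia
  have : NeZero L := ⟨hL⟩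
  have hmin : ((2 * w - 1 : ℕ) : ℕ∞) ≤ AddMonoid.minOrder (ZMod L) :=
    le_minOrder_of_forall_prime_dvd_natCard (by rwa [Nat.card_zmod])
  have hw_sub : (0 : ℝ) < w - 1 := sub_pos.2 (by exact_mod_cast hw)
  have hwM_sub : (0 : ℝ) < 2 * w - M := sub_pos.2 (by exact_mod_cast hMw)
  have hw_two : (0 : ℝ) < 2 * w - 2 := by linarith
  have hone : ∀ S ∈ C, (1 : ℝ) ≤
      crossDiffCount S / ((2 * w - M) * (w - 1)) + selfDiffCount S / (2 * w - 2) := by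
    intro S hS
    obtain rfl : #S = w := hC.1.1 S hS
    exact one_le_weighted_diffCount hmin hw hMw
  calc (#C : ℝ) = ∑ _S ∈ C, (1 : ℝ) := by rw [sum_const, nsmul_one]
    _ ≤ ∑ S ∈ C,
        ((crossDiffCount S : ℝ) / ((2 * w - M) * (w - 1)) + selfDiffCount S / (2 * w - 2)) :=
        sum_le_sum hone
    _ = (∑ S ∈ C, crossDiffCount S : ℝ) / ((2 * w - M) * (w - 1))
        + (∑ S ∈ C, selfDiffCount S : ℝ) / (2 * w - 2) := by
        rw [sum_add_distrib, sum_div, sum_div]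
    _ ≤ _ := by
        gcongr
        · exact hC.sum_crossDiffCount_le
        · exact hC.sum_selfDiffCount_le

theorem stmt_12 (M L w : ℕ) (hM : 0 < M) (hL : 0 < L) (hw : 2 ≤ w) (hMw : M < w)
    (hprime : ∀ p : ℕ, p.Prime → p ∣ L → 2 * w - 1 ≤ p)
    (C : Finset (Finset (Fin M × ZMod L))) (hC : IsAMOPPTSMCCAC M L w C) :
    (C.card : ℝ) ≤
      (M : ℝ) * ((M : ℝ) - 1) * ((L : ℝ) - 1) / ((2 * (w : ℝ) - (M : ℝ)) * ((w : ℝ) - 1))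
      + (M : ℝ) * ((L : ℝ) - 1) / (2 * (w : ℝ) - 2) := by
  exact stmt_12_general hw (by lia) hprime hC
end

section
/- Let p_1 < p_2 < ... < p_n be primes and let w_1, ..., w_n be positive integers (not necessarily distinct) such that p_i ≥ 2w_i - 1 for each i. Suppose that for each i = 1, ..., n there exists an equi-difference CAC of length p_i and weight w_i with m_i codewords. Then for any positive integers r_1, ..., r_n there exists a mixed-weight CAC of length L = p_1^{r_1}···p_n^{r_n} with weight-set {w_1, ..., w_n} which contains, for each i = 1, ..., n, exactly m_i·(p_i^{r_i} - 1)/(p_i - 1)·Π_{j=i+1}^{n} p_j^{r_j} codewords of size w_i, and hence has Σ_{i=1}^{n} [ m_i·(p_i^{r_i} - 1)/(p_i - 1)·Π_{j=i+1}^{n} p_j^{r_j} ] codewords in total. -/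
/-- The set of nonzero differences of a subset `S ⊆ Z_L`. -/
def dstar {L : ℕ} (S : Finset (ZMod L)) : Finset (ZMod L) :=
  ((S ×ˢ S).image fun p => p.1 - p.2).erase 0

/-- A conflict-avoiding code of length `L` and weight `w`. -/
def IsCAC (L w : ℕ) (C : Finset (Finset (ZMod L))) : Prop :=
  (∀ S ∈ C, S.card = w) ∧
  ∀ S ∈ C, ∀ S' ∈ C, S ≠ S' → Disjoint (dstar S) (dstar S')

/-- A codeword is equi-difference if it is of the form `{0, g, 2g, …, (w-1)g}`. -/
def IsEquiDiff {L : ℕ} (w : ℕ) (S : Finset (ZMod L)) : Prop :=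
  ∃ g : ZMod L, S = (Finset.range w).image fun j : ℕ => (j : ZMod L) * g

/-- A mixed-weight conflict-avoiding code of length `L` with weight-set `W`. -/
def IsMixedCAC (L : ℕ) (W : Set ℕ) (C : Finset (Finset (ZMod L))) : Prop :=
  (∀ S ∈ C, S.card ∈ W) ∧
  ∀ S ∈ C, ∀ S' ∈ C, S ≠ S' → Disjoint (dstar S) (dstar S')

/-!
Peel off the factors of `L` one at a time, starting from `p₁`. If `L = p M`, a code of length `M`
embeds into `Z_L` through multiplication by `p`, so all its differences vanish mod `p`. The new
codewords are the equi-difference ones whose generators are the `m M` lifts to `Z_L` of the `m`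
generators of a code of length `p`; their differences are nonzero mod `p`. A coincidence
`k g = k' g'` between two of them forces `k = k'` and `g ≡ g'` mod `p` since `|k - k'| ≤ 2 w - 2`,
and then `g = g'` because `k` is prime to `L`, which has no prime factor below `w`.
-/

/-- The `w`-rough numbers, i.e. those without prime factors below `w`. Rather than through prime
factors, this is phrased as coprimality to all positive integers below `w`. -/
def IsRough (w N : ℕ) : Prop :=
  ∀ k, 0 < k → k < w → k.Coprime N

namespace IsRough

variable {v w M N : ℕ}

theorem of_prime {p : ℕ} (hp : p.Prime) (hw : w ≤ p) : IsRough w p :=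
  fun _ hk hkw => (Nat.coprime_of_lt_prime hk.ne' (hkw.trans_le hw) hp).symm

theorem mono (hvw : v ≤ w) (hN : IsRough w N) : IsRough v N :=
  fun k hk hkv => hN k hk (hkv.trans_le hvw)

theorem mul (hM : IsRough w M) (hN : IsRough w N) : IsRough w (M * N) :=
  fun k hk hkw => (hM k hk hkw).mul_right (hN k hk hkw)

theorem pow (hN : IsRough w N) (r : ℕ) : IsRough w (N ^ r) :=
  fun k hk hkw => (hN k hk hkw).pow_right r

theorem prod {ι : Type*} {s : Finset ι} {N : ι → ℕ} (hN : ∀ i ∈ s, IsRough w (N i)) :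
    IsRough w (∏ i ∈ s, N i) :=
  fun k hk hkw => Nat.Coprime.prod_right fun i hi => hN i hi k hk hkw

theorem zsmul_injective (hN : IsRough w N) {k : ℤ} (hk : k ≠ 0) (hkw : |k| < w) :
    Function.Injective fun x : ZMod N => k • x := by
  have hunit : IsUnit (k : ZMod N) := by
    have hnat : IsUnit (k.natAbs : ZMod N) :=
      (ZMod.isUnit_iff_coprime _ _).2 (hN _ (Int.natAbs_pos.2 hk) (by
        rwa [Int.abs_eq_natAbs, Nat.cast_lt] at hkw))
    rcases Int.natAbs_eq k with h | h <;> rw [h] <;> simpa using hnat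
  simpa only [zsmul_eq_mul] using hunit.mul_right_injective

theorem zsmul_ne_zero (hN : IsRough w N) {k : ℤ} (hk : k ≠ 0) (hkw : |k| < w) {x : ZMod N}
    (hx : x ≠ 0) : k • x ≠ 0 :=
  fun h => hx (hN.zsmul_injective hk hkw (h.trans (smul_zero k).symm))

end IsRough

section Differences

variable {L M : ℕ}

theorem mem_dstar {S : Finset (ZMod L)} {x : ZMod L} :
    x ∈ dstar S ↔ x ≠ 0 ∧ ∃ a ∈ S, ∃ b ∈ S, a - b = x := by
  simp only [dstar, Finset.mem_erase, Finset.mem_image, Finset.mem_product, Prod.exists]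
  grind

theorem dstar_image {φ : ZMod M →+ ZMod L} (hφ : Function.Injective φ) (S : Finset (ZMod M)) :
    dstar (S.image φ) = (dstar S).image φ := by
  ext x
  simp only [mem_dstar, Finset.mem_image]
  constructor
  · rintro ⟨hx, _, ⟨a, ha, rfl⟩, _, ⟨b, hb, rfl⟩, rfl⟩
    rw [← map_sub, map_ne_zero_iff φ hφ] at hx
    exact ⟨a - b, ⟨hx, a, ha, b, hb, rfl⟩, map_sub φ a b⟩
  · rintro ⟨_, ⟨hx, a, ha, b, hb, rfl⟩, rfl⟩
    exact ⟨(map_ne_zero_iff φ hφ).2 hx, _, ⟨a, ha, rfl⟩, _, ⟨b, hb, rfl⟩, (map_sub φ a b).symm⟩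

theorem pairwiseDisjoint_dstar_image {φ : ZMod M →+ ZMod L} (hφ : Function.Injective φ)
    {C : Finset (Finset (ZMod M))} (hC : (C : Set (Finset (ZMod M))).PairwiseDisjoint dstar) :
    (C.image (Finset.image φ) : Set (Finset (ZMod L))).PairwiseDisjoint dstar := by
  rw [Finset.coe_image, (Finset.image_injective hφ).injOn.pairwiseDisjoint_image]
  intro S hS S' hS' hne
  simp only [Function.onFun, Function.comp_apply, dstar_image hφ]
  exact (Finset.disjoint_image hφ).2 (hC hS hS' hne)

theorem zsmul_mem_dstar_progression {w : ℕ} {k : ℤ} (hkw : |k| < w) {g : ZMod L}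
    (hkg : k • g ≠ 0) : k • g ∈ dstar ((Finset.range w).image fun j : ℕ => (j : ZMod L) * g) := by
  have mem_progression (j : ℕ) (hj : j < w) :
      (j : ZMod L) * g ∈ (Finset.range w).image fun j : ℕ => (j : ZMod L) * g :=
    Finset.mem_image_of_mem _ (Finset.mem_range.2 hj)
  rw [abs_lt] at hkw
  refine mem_dstar.2 ⟨hkg, _, mem_progression k.toNat (by omega),
    _, mem_progression (-k).toNat (by omega), ?_⟩
  calc (k.toNat : ZMod L) * g - ((-k).toNat : ZMod L) * g
      = ((k.toNat - (-k).toNat : ℤ) : ZMod L) * g := by push_cast; ring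
    _ = k • g := by rw [Int.toNat_sub_toNat_neg, zsmul_eq_mul]

end Differences

/-- `G` is a set of generators of weight-`w` equi-difference codewords: the differences `k • g` with
`0 < |k| < w` and `g ∈ G` are pairwise distinct. For `w = 1` there are no such differences, so
`0 ∉ G` is required separately. -/
structure IsGeneratorSet {A : Type*} [AddGroup A] (w : ℕ) (G : Set A) : Prop where
  zero_notMem : 0 ∉ G
  injOn_zsmul : ({k : ℤ | k ≠ 0 ∧ |k| < w} ×ˢ G).InjOn fun x => x.1 • x.2

/-- The codeword `{g, 2g, …, wg}`. It is the translate by `g` of the equi-difference codeword with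
generator `g`; unlike the latter it still determines `g` when `w = 1`. -/
def multiples {L : ℕ} (w : ℕ) (g : ZMod L) : Finset (ZMod L) :=
  (Finset.Icc 1 w).image fun j => j • g

theorem self_mem_multiples {L w : ℕ} (hw : 0 < w) (g : ZMod L) : g ∈ multiples w g :=
  Finset.mem_image.2 ⟨1, Finset.mem_Icc.2 ⟨le_rfl, hw⟩, one_nsmul g⟩

theorem exists_zsmul_eq_of_mem_dstar_multiples {L w : ℕ} {g x : ZMod L}
    (hx : x ∈ dstar (multiples w g)) : ∃ k : ℤ, (k ≠ 0 ∧ |k| < w) ∧ k • g = x := by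
  obtain ⟨hx, a, ha, b, hb, rfl⟩ := mem_dstar.1 hx
  obtain ⟨i, hi, rfl⟩ := Finset.mem_image.1 ha
  obtain ⟨j, hj, rfl⟩ := Finset.mem_image.1 hb
  have hij : i ≠ j := fun h => hx (by rw [h, sub_self])
  rw [Finset.mem_Icc] at hi hj
  refine ⟨i - j, ⟨by omega, abs_lt.2 (by omega)⟩, ?_⟩
  rw [sub_smul, natCast_zsmul, natCast_zsmul]

namespace IsGeneratorSet

section AddGroup

variable {A B : Type*} [AddGroup A] [AddGroup B] {w : ℕ}

theorem of_one {G : Set A} (h0 : 0 ∉ G) : IsGeneratorSet 1 G where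
  zero_notMem := h0
  injOn_zsmul := by
    rintro ⟨k, g⟩ ⟨⟨hk, hk1⟩, -⟩
    exact absurd (Int.abs_lt_one_iff.1 (by simpa using hk1)) hk

theorem zsmul_ne_zero {G : Set A} (hG : IsGeneratorSet w G) {g : A} (hg : g ∈ G) {k : ℤ}
    (hk : k ≠ 0) (hkw : |k| < w) : k • g ≠ 0 := by
  intro h
  have hkg : k • g = (-k) • g := by rw [neg_zsmul, h, neg_zero]
  have hpair := hG.injOn_zsmul (x₁ := (k, g)) (x₂ := (-k, g)) ⟨⟨hk, hkw⟩, hg⟩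
    ⟨⟨neg_ne_zero.2 hk, by rwa [abs_neg]⟩, hg⟩ hkg
  have hneg : k = -k := congrArg Prod.fst hpair
  omega

theorem preimage {H : Set B} (hH : IsGeneratorSet w H) (f : A →+ B)
    (hA : ∀ k : ℤ, k ≠ 0 → |k| < w → Function.Injective fun x : A => k • x) :
    IsGeneratorSet w (f ⁻¹' H) where
  zero_notMem h := hH.zero_notMem (by simpa using h)
  injOn_zsmul := by
    rintro ⟨k, g⟩ ⟨hk, hg⟩ ⟨k', g'⟩ ⟨hk', hg'⟩ (heq : k • g = k' • g')
    have hmap : k • f g = k' • f g' := by rw [← map_zsmul, ← map_zsmul, heq]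
    have hpair := hH.injOn_zsmul (x₁ := (k, f g)) (x₂ := (k', f g')) ⟨hk, hg⟩ ⟨hk', hg'⟩ hmap
    obtain rfl : k = k' := congrArg Prod.fst hpair
    rw [hA k hk.1 hk.2 heq]

end AddGroup

variable {L w : ℕ} {G : Set (ZMod L)}

theorem card_multiples (hG : IsGeneratorSet w G) {g : ZMod L} (hg : g ∈ G) :
    (multiples w g).card = w := by
  rw [multiples, Finset.card_image_of_injOn, Nat.card_Icc, Nat.add_sub_cancel]
  intro i hi j hj (heq : i • g = j • g)
  rw [Finset.coe_Icc, Set.mem_Icc] at hi hj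
  by_contra hij
  refine hG.zsmul_ne_zero (k := i - j) hg (by omega) (abs_lt.2 (by omega)) ?_
  rw [sub_smul, natCast_zsmul, natCast_zsmul, heq, sub_self]

theorem disjoint_dstar_multiples (hG : IsGeneratorSet w G) {g g' : ZMod L} (hg : g ∈ G)
    (hg' : g' ∈ G) (hne : g ≠ g') : Disjoint (dstar (multiples w g)) (dstar (multiples w g')) := by
  refine Finset.disjoint_left.2 fun x hx hx' => hne ?_
  obtain ⟨k, hk, rfl⟩ := exists_zsmul_eq_of_mem_dstar_multiples hx
  obtain ⟨k', hk', heq⟩ := exists_zsmul_eq_of_mem_dstar_multiples hx'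
  exact congrArg Prod.snd
    (hG.injOn_zsmul (x₁ := (k, g)) (x₂ := (k', g')) ⟨hk, hg⟩ ⟨hk', hg'⟩ heq.symm)

theorem injOn_multiples (hG : IsGeneratorSet w G) (hw : 0 < w) : G.InjOn (multiples w) := by
  intro g hg g' hg' heq
  by_contra hne
  have hdiff : dstar (multiples w g) = ∅ := by
    simpa [← heq] using hG.disjoint_dstar_multiples hg hg' hne
  have hsub : multiples w g ⊆ {g} := by
    intro x hx
    by_contra hxg
    have hmem : x - g ∈ dstar (multiples w g) :=
      mem_dstar.2 ⟨sub_ne_zero.2 (by simpa using hxg), x, hx, g, self_mem_multiples hw g, rfl⟩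
    simp [hdiff] at hmem
  exact hne (Finset.mem_singleton.1 (hsub (heq ▸ self_mem_multiples hw g'))).symm

theorem pairwiseDisjoint_dstar_image_multiples {G : Finset (ZMod L)}
    (hG : IsGeneratorSet w (G : Set (ZMod L))) (hw : 0 < w) :
    (G.image (multiples w) : Set (Finset (ZMod L))).PairwiseDisjoint dstar := by
  rw [Finset.coe_image, (hG.injOn_multiples hw).pairwiseDisjoint_image]
  exact fun g hg g' hg' => hG.disjoint_dstar_multiples hg hg'

theorem map_card_image_multiples {G : Finset (ZMod L)}
    (hG : IsGeneratorSet w (G : Set (ZMod L))) (hw : 0 < w) :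
    (G.image (multiples w)).val.map Finset.card = Multiset.replicate G.card w := by
  rw [Finset.image_val_of_injOn (hG.injOn_multiples hw), Multiset.map_map]
  exact (Multiset.map_congr rfl fun g hg => hG.card_multiples hg).trans (Multiset.map_const' _ _)

theorem disjoint_dstar_multiples_dstar_image {A : Type*} [AddGroup A] {M : ℕ} {H : Set A}
    {φ : ZMod M →+ ZMod L} {ρ : ZMod L →+ A} (hH : IsGeneratorSet w H)
    (hφ : Function.Injective φ) (hρφ : ∀ x, ρ (φ x) = 0) {g : ZMod L} (hg : ρ g ∈ H)
    (S : Finset (ZMod M)) : Disjoint (dstar (multiples w g)) (dstar (S.image φ)) := by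
  refine Finset.disjoint_left.2 fun x hx hx' => ?_
  obtain ⟨k, ⟨hk, hkw⟩, rfl⟩ := exists_zsmul_eq_of_mem_dstar_multiples hx
  rw [dstar_image hφ] at hx'
  obtain ⟨y, -, hy⟩ := Finset.mem_image.1 hx'
  exact hH.zsmul_ne_zero hg hk hkw (by rw [← map_zsmul, ← hy, hρφ])

end IsGeneratorSet

section EquiDifference

variable {p w : ℕ} {C : Finset (Finset (ZMod p))}

theorem exists_generators (hw : 2 ≤ w) (hC : IsCAC p w C) (hequi : ∀ S ∈ C, IsEquiDiff w S) :
    ∃ γ : Finset (ZMod p) → ZMod p, ∀ S ∈ C, γ S ≠ 0 ∧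
      S = (Finset.range w).image fun j : ℕ => (j : ZMod p) * γ S := by
  choose! γ hγ using hequi
  refine ⟨γ, fun S hS => ⟨fun h0 => ?_, hγ S hS⟩⟩
  have hS0 : S ⊆ {0} := by
    rw [hγ S hS, h0]
    exact Finset.image_subset_iff.2 fun j _ => by simp
  have hcard : S.card ≤ 1 := by simpa using Finset.card_le_card hS0
  have := hC.1 S hS
  omega

theorem exists_isGeneratorSet_of_two_le (hw : 2 ≤ w) (hp : IsRough (2 * w - 1) p)
    (hC : IsCAC p w C) (hequi : ∀ S ∈ C, IsEquiDiff w S) :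
    ∃ G : Finset (ZMod p), IsGeneratorSet w (G : Set (ZMod p)) ∧ G.card = C.card := by
  obtain ⟨γ, hγ⟩ := exists_generators hw hC hequi
  have zsmul_mem_dstar (S) (hS : S ∈ C) (k : ℤ) (hk : k ≠ 0) (hkw : |k| < w) :
      k • γ S ∈ dstar S := by
    have hne : k • γ S ≠ 0 := hp.zsmul_ne_zero hk (by omega) (hγ S hS).1
    have hmem := zsmul_mem_dstar_progression hkw hne
    rwa [← (hγ S hS).2] at hmem
  refine ⟨C.image γ, ⟨?_, ?_⟩, Finset.card_image_of_injOn fun S hS S' hS' heq => ?_⟩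
  · rw [Finset.mem_coe, Finset.mem_image]
    rintro ⟨S, hS, h0⟩
    exact (hγ S hS).1 h0
  · rintro ⟨k, g⟩ ⟨⟨hk, hkw⟩, hg⟩ ⟨k', g'⟩ ⟨⟨hk', hkw'⟩, hg'⟩ (heq : k • g = k' • g')
    obtain ⟨S, hS, rfl⟩ := Finset.mem_image.1 hg
    obtain ⟨S', hS', rfl⟩ := Finset.mem_image.1 hg'
    obtain rfl : S = S' := by
      by_contra hne
      exact Finset.disjoint_left.1 (hC.2 S hS S' hS' hne) (zsmul_mem_dstar S hS k hk hkw)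
        (heq ▸ zsmul_mem_dstar S' hS' k' hk' hkw')
    obtain rfl : k = k' := by
      by_contra hne
      refine hp.zsmul_ne_zero (sub_ne_zero.2 hne) ?_ (hγ S hS).1 (by rw [sub_smul, heq, sub_self])
      rw [abs_lt] at hkw hkw' ⊢
      omega
    rfl
  · rw [(hγ S hS).2, (hγ S' hS').2, heq]

theorem exists_isGeneratorSet (hp1 : 1 < p) (hw : 0 < w) (hp : IsRough (2 * w - 1) p)
    (hC : IsCAC p w C) (hequi : ∀ S ∈ C, IsEquiDiff w S) :
    ∃ G : Finset (ZMod p), IsGeneratorSet w (G : Set (ZMod p)) ∧ G.card = C.card := by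
  obtain rfl | hw2 : w = 1 ∨ 2 ≤ w := by omega
  · have : Fact (1 < p) := ⟨hp1⟩
    have hsub : C ⊆ {{0}} := by
      intro S hS
      obtain ⟨g, rfl⟩ := hequi S hS
      simp
    obtain ⟨G, hG1, hGC⟩ : ∃ G ⊆ ({1} : Finset (ZMod p)), G.card = C.card :=
      Finset.exists_subset_card_eq (by simpa using Finset.card_le_card hsub)
    exact ⟨G, .of_one fun h0 => zero_ne_one (Finset.mem_singleton.1 (hG1 h0)), hGC⟩
  · exact exists_isGeneratorSet_of_two_le hw2 hp hC hequi

end EquiDifference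

theorem card_mul_card_filter_map_mem {A B : Type*} [AddGroup A] [AddGroup B] [Fintype A]
    [Fintype B] [DecidableEq B] {f : A →+ B} (hf : Function.Surjective f) (H : Finset B) :
    Fintype.card B * (Finset.univ.filter fun x => f x ∈ H).card = H.card * Fintype.card A := by
  have card_preimage (H : Finset B) : (Finset.univ.filter fun x => f x ∈ H).card =
      H.card * (Finset.univ.filter fun x => f x = 0).card := by
    rw [Finset.card_eq_sum_card_fiberwise (f := f) (t := H) fun x hx => by simpa using hx]
    refine Finset.sum_const_nat fun b hb => ?_
    rw [← AddMonoidHom.card_fiber_eq_of_mem_range f (hf b) (hf 0), Finset.filter_filter]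
    congr 1
    ext x
    simp +contextual [hb]
  have hcard : Fintype.card A =
      Fintype.card B * (Finset.univ.filter fun x => f x = 0).card := by
    simpa using card_preimage Finset.univ
  rw [card_preimage, hcard]
  ring

theorem exists_injective_map_castHom_eq_zero (N M : ℕ) [NeZero N] :
    ∃ φ : ZMod M →+ ZMod (N * M), Function.Injective φ ∧
      ∀ x, ZMod.castHom (dvd_mul_right N M) (ZMod N) (φ x) = 0 := by
  let f : ℤ →+ ZMod (N * M) := (Int.castAddHom _).comp (AddMonoidHom.mulLeft (N : ℤ))
  have hf (z : ℤ) : f z = ((N * z : ℤ) : ZMod (N * M)) := rfl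
  have hfM : f M = 0 := by
    rw [hf]
    exact_mod_cast ZMod.natCast_self (N * M)
  refine ⟨ZMod.lift M ⟨f, hfM⟩, (ZMod.lift_injective M).2 fun z hz => ?_, fun x => ?_⟩
  · rw [hf, ZMod.intCast_zmod_eq_zero_iff_dvd, Nat.cast_mul] at hz
    rw [ZMod.intCast_zmod_eq_zero_iff_dvd]
    exact Int.dvd_of_mul_dvd_mul_left (mod_cast NeZero.ne N) hz
  · obtain ⟨z, rfl⟩ := ZMod.intCast_surjective x
    rw [ZMod.lift_coe, hf]
    simp

/-- `W` is the multiset of codeword sizes of some mixed-weight conflict-avoiding code of length `L`.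
A multiset records at once the weight-set, the number of codewords of each weight and the total
number of codewords. -/
def IsWeightSpectrum (L : ℕ) (W : Multiset ℕ) : Prop :=
  ∃ C : Finset (Finset (ZMod L)),
    (C : Set (Finset (ZMod L))).PairwiseDisjoint dstar ∧ C.val.map Finset.card = W

namespace IsWeightSpectrum

variable {M N w : ℕ} {W : Multiset ℕ}

theorem zero (L : ℕ) : IsWeightSpectrum L 0 :=
  ⟨∅, by simp, rfl⟩

theorem replicate_add {A : Type*} [AddGroup A] {L : ℕ} {φ : ZMod M →+ ZMod L}
    {ρ : ZMod L →+ A} {G : Set A} {T : Finset (ZMod L)} (hφ : Function.Injective φ)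
    (hρφ : ∀ x, ρ (φ x) = 0) (hw : 0 < w) (hG : IsGeneratorSet w G)
    (hT : IsGeneratorSet w (T : Set (ZMod L))) (hρT : ∀ g ∈ T, ρ g ∈ G)
    (hW : IsWeightSpectrum M W) : IsWeightSpectrum L (Multiset.replicate T.card w + W) := by
  obtain ⟨C, hC, rfl⟩ := hW
  have hdisj : Disjoint (T.image (multiples w)) (C.image (Finset.image φ)) := by
    simp only [Finset.disjoint_left, Finset.mem_image, not_exists, not_and, forall_exists_index,
      and_imp, forall_apply_eq_imp_iff₂]
    intro g hg S _ hS
    obtain ⟨y, -, hy⟩ := Finset.mem_image.1 (hS ▸ self_mem_multiples hw g)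
    exact hG.zero_notMem (hρφ y ▸ hy ▸ hρT g hg)
  refine ⟨(T.image (multiples w)).disjUnion (C.image (Finset.image φ)) hdisj, ?_, ?_⟩
  · rw [Finset.coe_disjUnion, Set.pairwiseDisjoint_union]
    refine ⟨hT.pairwiseDisjoint_dstar_image_multiples hw, pairwiseDisjoint_dstar_image hφ hC, ?_⟩
    simp only [Finset.mem_coe, Finset.mem_image]
    rintro _ ⟨g, hg, rfl⟩ _ ⟨S, -, rfl⟩ -
    exact hG.disjoint_dstar_multiples_dstar_image hφ hρφ (hρT g hg) S
  · rw [Finset.disjUnion_val, Multiset.map_add, hT.map_card_image_multiples hw,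
      Finset.image_val_of_injOn (Finset.image_injective hφ).injOn, Multiset.map_map]
    congr 1
    exact Multiset.map_congr rfl fun S _ => Finset.card_image_of_injective S hφ

theorem mul [NeZero N] [NeZero M] {G : Finset (ZMod N)} (hw : 0 < w)
    (hG : IsGeneratorSet w (G : Set (ZMod N))) (hNM : IsRough w (N * M))
    (hW : IsWeightSpectrum M W) :
    IsWeightSpectrum (N * M) (Multiset.replicate (G.card * M) w + W) := by
  obtain ⟨φ, hφ, hρφ⟩ := exists_injective_map_castHom_eq_zero N M
  let ρ : ZMod (N * M) →+ ZMod N := (ZMod.castHom (dvd_mul_right N M) (ZMod N)).toAddMonoidHom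
  let T := Finset.univ.filter fun x => ρ x ∈ G
  have hT : IsGeneratorSet w (T : Set (ZMod (N * M))) := by
    convert hG.preimage ρ fun k => hNM.zsmul_injective
    ext x
    simp [T]
  have hcard : T.card = G.card * M := by
    have h := card_mul_card_filter_map_mem (f := ρ)
      (ZMod.castHom_surjective (dvd_mul_right N M)) G
    rw [ZMod.card, ZMod.card, mul_left_comm] at h
    exact Nat.eq_of_mul_eq_mul_left (NeZero.pos N) h
  rw [← hcard]
  exact hW.replicate_add (ρ := ρ) hφ hρφ hw hG hT fun g hg => (Finset.mem_filter.1 hg).2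

theorem pow_mul [NeZero N] [NeZero M] {G : Finset (ZMod N)} (hw : 0 < w)
    (hG : IsGeneratorSet w (G : Set (ZMod N))) (hN : IsRough w N) (hM : IsRough w M)
    (hW : IsWeightSpectrum M W) (r : ℕ) :
    IsWeightSpectrum (N ^ r * M)
      (Multiset.replicate (G.card * (∑ i ∈ Finset.range r, N ^ i) * M) w + W) := by
  induction r with
  | zero => simpa using hW
  | succ r ih =>
    have h := ih.mul hw hG (hN.mul ((hN.pow r).mul hM))
    rw [← add_assoc, ← Multiset.replicate_add] at h
    convert h using 1
    · ring
    · rw [Finset.sum_range_succ]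
      ring_nf

theorem prod {n : ℕ} {p w r : Fin n → ℕ} [∀ i, NeZero (p i)] {G : ∀ i, Finset (ZMod (p i))}
    (hw : ∀ i, 0 < w i) (hG : ∀ i, IsGeneratorSet (w i) (G i : Set (ZMod (p i))))
    (hrough : ∀ i j, i ≤ j → IsRough (w i) (p j)) :
    IsWeightSpectrum (∏ i, p i ^ r i) (∑ i, Multiset.replicate
      ((G i).card * (∑ k ∈ Finset.range (r i), p i ^ k) * ∏ j ∈ Finset.Ioi i, p j ^ r j)
      (w i)) := by
  induction n with
  | zero => exact zero _
  | succ n ih =>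
    have htail := ih (p := fun i => p i.succ) (w := fun i => w i.succ) (r := fun i => r i.succ)
      (fun i => hw i.succ) (fun i => hG i.succ)
      fun i j hij => hrough i.succ j.succ (Fin.succ_le_succ_iff.2 hij)
    have htail_rough : IsRough (w 0) (∏ i : Fin n, p i.succ ^ r i.succ) :=
      .prod fun i _ => (hrough 0 i.succ (Fin.zero_le _)).pow _
    have : NeZero (∏ i : Fin n, p i.succ ^ r i.succ) :=
      ⟨Finset.prod_ne_zero_iff.2 fun i _ => pow_ne_zero _ (NeZero.ne _)⟩
    rw [Fin.prod_univ_succ, Fin.sum_univ_succ, Fin.prod_Ioi_zero]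
    simp only [Fin.prod_Ioi_succ]
    exact htail.pow_mul (hw 0) (hG 0) (hrough 0 0 le_rfl) htail_rough (r 0)

theorem exists_isMixedCAC {ι : Type*} [Fintype ι] {L : ℕ} {c w : ι → ℕ}
    (h : IsWeightSpectrum L (∑ i, Multiset.replicate (c i) (w i))) :
    ∃ C : Finset (Finset (ZMod L)), IsMixedCAC L {k | ∃ i, w i = k} C ∧
      (∀ k : ℕ, (C.filter fun S => S.card = k).card =
        ∑ i ∈ Finset.univ.filter (fun i => w i = k), c i) ∧
      C.card = ∑ i, c i := by
  obtain ⟨C, hC, hW⟩ := h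
  refine ⟨C, ⟨fun S hS => ?_, fun S hS S' hS' => hC hS hS'⟩, fun k => ?_, ?_⟩
  · have hmem : S.card ∈ ∑ i, Multiset.replicate (c i) (w i) :=
      hW ▸ Multiset.mem_map_of_mem _ hS
    obtain ⟨i, -, hi⟩ := Multiset.mem_sum.1 hmem
    exact ⟨i, (Multiset.eq_of_mem_replicate hi).symm⟩
  · calc (C.filter fun S => S.card = k).card = (C.val.map Finset.card).count k := by
          simp only [Multiset.count_map, ← Finset.filter_val, Finset.card_val, eq_comm]
      _ = ∑ i ∈ Finset.univ.filter (fun i => w i = k), c i := by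
          simp only [hW, Multiset.count_sum', Multiset.count_replicate, Finset.sum_filter]
  · calc C.card = (C.val.map Finset.card).card := (Multiset.card_map _ _).symm
      _ = ∑ i, c i := by simp only [hW, Multiset.card_sum, Multiset.card_replicate]

end IsWeightSpectrum

theorem stmt_15_general (n : ℕ) (p : Fin n → ℕ) (w m : Fin n → ℕ) (hp : ∀ i, 1 < p i)
    (hw : ∀ i, 0 < w i) (hpw : ∀ i, IsRough (2 * w i - 1) (p i))
    (hrough : ∀ i j, i < j → IsRough (w i) (p j))
    (hCAC : ∀ i, ∃ C : Finset (Finset (ZMod (p i))),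
      IsCAC (p i) (w i) C ∧ (∀ S ∈ C, IsEquiDiff (w i) S) ∧ C.card = m i)
    (r : Fin n → ℕ) :
    ∃ C : Finset (Finset (ZMod (∏ i, p i ^ r i))),
      IsMixedCAC (∏ i, p i ^ r i) {k | ∃ i, w i = k} C ∧
      (∀ k : ℕ, (C.filter fun S => S.card = k).card =
        ∑ i ∈ Finset.univ.filter (fun i => w i = k),
          m i * ((p i ^ r i - 1) / (p i - 1)) * ∏ j ∈ Finset.Ioi i, p j ^ r j) ∧
      C.card = ∑ i, m i * ((p i ^ r i - 1) / (p i - 1)) * ∏ j ∈ Finset.Ioi i, p j ^ r j := by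
  have hgen (i) : ∃ G : Finset (ZMod (p i)),
      IsGeneratorSet (w i) (G : Set (ZMod (p i))) ∧ G.card = m i := by
    obtain ⟨C, hC, hequi, hCm⟩ := hCAC i
    rw [← hCm]
    exact exists_isGeneratorSet (hp i) (hw i) (hpw i) hC hequi
  choose G hG hGm using hgen
  have hp0 (i : Fin n) : NeZero (p i) := ⟨(zero_lt_one.trans (hp i)).ne'⟩
  have hrough_le (i j) (hij : i ≤ j) : IsRough (w i) (p j) := by
    obtain rfl | hlt := hij.eq_or_lt
    · exact (hpw i).mono (by have := hw i; omega)
    · exact hrough i j hlt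
  have hspectrum := IsWeightSpectrum.prod (r := r) hw hG hrough_le
  simp only [hGm, fun i => Nat.geomSum_eq (hp i) (r i)] at hspectrum
  exact hspectrum.exists_isMixedCAC

theorem stmt_15 (n : ℕ) (p : Fin n → ℕ) (w m : Fin n → ℕ) (hp : ∀ i, (p i).Prime)
    (hmono : StrictMono p) (hw : ∀ i, 0 < w i) (hpw : ∀ i, 2 * w i - 1 ≤ p i)
    (hCAC : ∀ i, ∃ C : Finset (Finset (ZMod (p i))),
      IsCAC (p i) (w i) C ∧ (∀ S ∈ C, IsEquiDiff (w i) S) ∧ C.card = m i)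
    (r : Fin n → ℕ) (hr : ∀ i, 0 < r i) :
    ∃ C : Finset (Finset (ZMod (∏ i, p i ^ r i))),
      IsMixedCAC (∏ i, p i ^ r i) {k | ∃ i, w i = k} C ∧
      (∀ k : ℕ, (C.filter fun S => S.card = k).card =
        ∑ i ∈ Finset.univ.filter (fun i => w i = k),
          m i * ((p i ^ r i - 1) / (p i - 1)) * ∏ j ∈ Finset.Ioi i, p j ^ r j) ∧
      C.card = ∑ i, m i * ((p i ^ r i - 1) / (p i - 1)) * ∏ j ∈ Finset.Ioi i, p j ^ r j := by
  exact stmt_15_general n p w m (fun i => (hp i).one_lt) hw (fun i => .of_prime (hp i) (hpw i))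
    (fun i j hij => .of_prime (hp j) (by have := hw i; have := hpw i; have := hmono hij; omega))
    hCAC r
end

section
/- Let A and B be nonempty subsets of Z_L with |A - B| ≤ |A| + |B| - 2. Then |H(A - B)| does not divide |A| + |B| - 1. -/
/-- The difference set `A - B = {a - b : a ∈ A, b ∈ B}` in `Z_L`. -/
def fdiff {L : ℕ} (A B : Finset (ZMod L)) : Finset (ZMod L) :=
  (A ×ˢ B).image fun p => p.1 - p.2

/-- The stabilizer `H(T) = {h ∈ Z_L : h + T = T}` of a subset `T ⊆ Z_L`. -/
def stab {L : ℕ} [NeZero L] (T : Finset (ZMod L)) : Finset (ZMod L) :=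
  Finset.univ.filter fun h => T.image (fun t => h + t) = T

/-!
Kneser's theorem, in the form `|A| + |B| ≤ |A - B| + |H(A - B)|`, holds in every abelian group, and
`|H(A - B)|` divides `|A - B|`. If it also divided `|A| + |B| - 1`, it would divide the positive
number `|A| + |B| - 1 - |A - B|`, which Kneser's theorem shows to be smaller than `|H(A - B)|`.

Kneser's theorem itself is proved for sums. The inequality `n ≤ |C| + |H(C)|` passes from two sets
to their union, so it is enough to cover `A + B` by subsets `C` satisfying it with `n = |A| + |B|`.
A piece `C` containing a given `a + b` comes from applying Dyson `e`-transforms with `e + b ∈ A`: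
they preserve `|A| + |B|`, shrink `A + B` and keep `a ∈ A`, `b ∈ B`; once none of them shrinks `B`
any more, `B - b` stabilizes `A`, and `C = A + b` works.
-/

open AddAction Finset
open scoped Pointwise

lemma card_stabilizer_dvd_ncard {G : Type*} [AddCommGroup G] (s : Set G) :
    Nat.card (stabilizer G s) ∣ s.ncard := by
  have saturated : ((↑) : G → G ⧸ stabilizer G s) ⁻¹' ((↑) '' s) = s := by
    rw [QuotientAddGroup.preimage_image_mk_eq_add, add_stabilizer_self]
  rw [← Nat.card_coe_set_eq, ← Nat.card_congr (Equiv.setCongr saturated),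
    Nat.card_congr (QuotientAddGroup.preimageMkEquivAddSubgroupProdSet _ _), Nat.card_prod]
  exact dvd_mul_right _ _

section Transversal

variable {G : Type*} [AddGroup G] {H K : AddSubgroup G}

lemma card_mul_card_le_card_inf_mul_card_add [DecidableEq G] [Finite ↥(H ⊓ K)] {s t : Finset G}
    (hs : (s : Set G) ⊆ H) (ht : (t : Set G) ⊆ K) :
    #s * #t ≤ Nat.card ↥(H ⊓ K) * #(s + t) := by
  rw [← card_product]
  refine card_le_mul_card_image_of_maps_to (f := fun p ↦ p.1 + p.2)
    (fun p hp ↦ add_mem_add (mem_product.1 hp).1 (mem_product.1 hp).2) _ fun z _ ↦ ?_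
  rcases ({p ∈ s ×ˢ t | p.1 + p.2 = z}).eq_empty_or_nonempty with hempty | ⟨⟨x₀, y₀⟩, h₀⟩
  · simp [hempty]
  rw [← Set.ncard_coe_finset, ← SetLike.coe_sort_coe, Nat.card_coe_set_eq]
  simp only [mem_filter, mem_product] at h₀
  refine Set.ncard_le_ncard_of_injOn (fun p ↦ -x₀ + p.1) ?_ ?_ (Set.toFinite _)
  · rintro ⟨x, y⟩ hp
    simp only [coe_filter, mem_product, Set.mem_ofPred_eq] at hp
    have shift : -x₀ + x = y₀ + -y := by
      rw [neg_add_eq_iff_eq_add, ← add_assoc, eq_add_neg_iff_add_eq, hp.2, h₀.2]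
    refine ⟨H.add_mem (H.neg_mem (hs h₀.1.1)) (hs hp.1.1), ?_⟩
    simp only [shift]
    exact K.add_mem (ht h₀.1.2) (K.neg_mem (ht hp.1.2))
  · rintro ⟨x, y⟩ hp ⟨x', y'⟩ hp' hxx'
    simp only [coe_filter, mem_product, Set.mem_ofPred_eq] at hp hp'
    obtain rfl : x = x' := add_left_cancel hxx'
    rw [add_left_cancel (hp.2.trans hp'.2.symm)]

lemma nat_add_le_add_of_mul_le_mul {a b k d : ℕ} (hk : 0 < k) (ha : a ≤ d) (hb : b ≤ d)
    (hab : a * b ≤ k * d) : a + b ≤ d + k := by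
  rcases le_total a k with hak | hka
  · omega
  rcases le_total b k with hbk | hkb
  · omega
  obtain ⟨i, rfl⟩ := Nat.exists_eq_add_of_le hka
  obtain ⟨j, rfl⟩ := Nat.exists_eq_add_of_le hkb
  have : k + i + j ≤ d := Nat.le_of_mul_le_mul_left (by nlinarith) hk
  omega

lemma ncard_add_ncard_le_ncard_add_add_card_inf [Finite H] [Finite K] {s t : Set G}
    (hs : s ⊆ H) (ht : t ⊆ K) (hs₀ : s.Nonempty) (ht₀ : t.Nonempty) :
    s.ncard + t.ncard ≤ (s + t).ncard + Nat.card ↥(H ⊓ K) := by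
  classical
  have : Finite ↥(H ⊓ K) := Finite.Set.finite_inter_of_left (H : Set G) K
  lift s to Finset G using (Set.toFinite (H : Set G)).subset hs
  lift t to Finset G using (Set.toFinite (K : Set G)).subset ht
  rw [← coe_add]
  simp only [Set.ncard_coe_finset]
  exact nat_add_le_add_of_mul_le_mul Nat.card_pos (card_le_card_add_right ht₀)
    (card_le_card_add_left hs₀) (card_mul_card_le_card_inf_mul_card_add hs ht)

end Transversal

section Union

variable {G : Type*} [AddCommGroup G] {s t : Set G}

lemma stabilizer_sdiff_add_stabilizer_inter_subset :
    (stabilizer G t \ s : Set G) + (stabilizer G s ∩ t : Set G) ⊆ t \ s := by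
  rintro _ ⟨x, ⟨hx, hxs⟩, y, ⟨hy, hyt⟩, rfl⟩
  refine ⟨(mem_stabilizer_set.1 hx y).2 hyt, fun hxy ↦ hxs ?_⟩
  rwa [← mem_stabilizer_set.1 hy, vadd_eq_add, add_comm]

lemma ncard_stabilizer_sdiff_add_ncard_stabilizer_inter_le (ht : t.Finite)
    [Finite (stabilizer G s)] [Finite (stabilizer G t)]
    (hdiff : (stabilizer G t \ s : Set G).Nonempty)
    (hinter : (stabilizer G s ∩ t : Set G).Nonempty) :
    (stabilizer G t \ s : Set G).ncard + (stabilizer G s ∩ t : Set G).ncard ≤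
      (t \ s).ncard + Nat.card ↥(stabilizer G s ⊓ stabilizer G t) := by
  rw [inf_comm]
  exact (ncard_add_ncard_le_ncard_add_add_card_inf Set.sdiff_subset Set.inter_subset_left
    hdiff hinter).trans (Nat.add_le_add_right
      (Set.ncard_le_ncard stabilizer_sdiff_add_stabilizer_inter_subset ht.sdiff) _)

lemma card_stabilizer_le_ncard_sdiff_add_or_of_zero_mem (hs : s.Finite) (ht : t.Finite)
    (hs₀ : s.Nonempty) (hst : Nat.card (stabilizer G s) ≤ Nat.card (stabilizer G t))
    (h0t : 0 ∈ t) (h0s : 0 ∉ s) :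
    Nat.card (stabilizer G s) ≤ (t \ s).ncard + Nat.card ↥(stabilizer G s ⊓ stabilizer G t) ∨
      Nat.card (stabilizer G t) ≤
        (s \ t).ncard + Nat.card ↥(stabilizer G s ⊓ stabilizer G t) := by
  have : Finite (stabilizer G s) := stabilizer_finite hs₀ hs
  have : Finite (stabilizer G t) := stabilizer_finite ⟨0, h0t⟩ ht
  have split_s : _ = Nat.card (stabilizer G s) :=
    Set.ncard_inter_add_ncard_sdiff_eq_ncard (stabilizer G s : Set G) t
  have split_t : _ = Nat.card (stabilizer G t) :=
    Set.ncard_inter_add_ncard_sdiff_eq_ncard (stabilizer G t : Set G) s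
  have bound_t := ncard_stabilizer_sdiff_add_ncard_stabilizer_inter_le ht
    (s := s) ⟨0, zero_mem _, h0s⟩ ⟨0, zero_mem _, h0t⟩
  by_cases hle : (stabilizer G s \ t : Set G).ncard ≤ (stabilizer G t \ s : Set G).ncard
  · left
    omega
  · right
    have bound_s := ncard_stabilizer_sdiff_add_ncard_stabilizer_inter_le (s := t) hs
      (Set.nonempty_of_ncard_ne_zero (by omega)) (Set.nonempty_of_ncard_ne_zero (by omega))
    rw [inf_comm] at bound_s
    omega

lemma card_stabilizer_le_ncard_sdiff_add_or (hs : s.Finite) (ht : t.Finite) (hs₀ : s.Nonempty)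
    (hst : Nat.card (stabilizer G s) ≤ Nat.card (stabilizer G t)) (hts : ¬ t ⊆ s) :
    Nat.card (stabilizer G s) ≤ (t \ s).ncard + Nat.card ↥(stabilizer G s ⊓ stabilizer G t) ∨
      Nat.card (stabilizer G t) ≤
        (s \ t).ncard + Nat.card ↥(stabilizer G s ⊓ stabilizer G t) := by
  obtain ⟨c, hct, hcs⟩ := Set.not_subset.1 hts
  have translated := card_stabilizer_le_ncard_sdiff_add_or_of_zero_mem
    (hs.vadd_set (a := -c)) (ht.vadd_set (a := -c)) hs₀.vadd_set
    (by simpa only [stabilizer_vadd_eq_right] using hst)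
    (by simpa [Set.mem_vadd_set_iff_neg_vadd_mem] using hct)
    (by simpa [Set.mem_vadd_set_iff_neg_vadd_mem] using hcs)
  simpa only [stabilizer_vadd_eq_right, ← Set.vadd_set_sdiff, Set.ncard_vadd_set] using translated

theorem le_ncard_union_add_card_stabilizer {n : ℕ} (hs : s.Finite) (ht : t.Finite)
    (hns : n ≤ s.ncard + Nat.card (stabilizer G s))
    (hnt : n ≤ t.ncard + Nat.card (stabilizer G t)) :
    n ≤ (s ∪ t).ncard + Nat.card (stabilizer G (s ∪ t)) := by
  wlog hst : Nat.card (stabilizer G s) ≤ Nat.card (stabilizer G t) generalizing s t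
  · rw [Set.union_comm]
    exact this ht hs hnt hns (le_of_not_ge hst)
  by_cases hts : t ⊆ s
  · rwa [Set.union_eq_left.2 hts]
  rcases s.eq_empty_or_nonempty with rfl | hs₀
  · rwa [Set.empty_union]
  have : Finite (stabilizer G (s ∪ t)) := stabilizer_finite hs₀.inl (hs.union ht)
  have inf_le : Nat.card ↥(stabilizer G s ⊓ stabilizer G t) ≤ Nat.card (stabilizer G (s ∪ t)) :=
    AddSubgroup.card_le_of_le stabilizer_inf_stabilizer_le_stabilizer_union
  have card_t := Set.ncard_sdiff_add_ncard s t hs ht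
  have card_s := Set.ncard_sdiff_add_ncard t s ht hs
  rw [Set.union_comm] at card_s
  rcases card_stabilizer_le_ncard_sdiff_add_or hs ht hs₀ hst hts with h | h <;> omega

end Union

section Kneser

variable {G : Type*} [AddCommGroup G] [DecidableEq G] {A B : Finset G}

lemma card_le_card_stabilizer_of_forall_vadd_subset {b : G} (hA : A.Nonempty)
    (hsub : ∀ a ∈ A, (a - b) +ᵥ B ⊆ A) : #B ≤ Nat.card (stabilizer G A) := by
  have : Finite (stabilizer G A) := by
    rw [← stabilizer_coe_finset]
    exact stabilizer_finite hA A.finite_toSet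
  have translate_le : ((-b +ᵥ B : Finset G) : Set G) ⊆ stabilizer G A := by
    intro x hx
    obtain ⟨y, hy, rfl⟩ := mem_vadd_finset.1 (mem_coe.1 hx)
    refine mem_stabilizer_finset'.2 fun a ha ↦ ?_
    convert hsub a ha (vadd_mem_vadd_finset hy) using 1
    simp only [vadd_eq_add]
    abel
  calc
    #B = ((-b +ᵥ B : Finset G) : Set G).ncard := by rw [Set.ncard_coe_finset, card_vadd_finset]
    _ ≤ (stabilizer G A : Set G).ncard := Set.ncard_le_ncard translate_le (Set.toFinite _)

lemma exists_subset_add_card_add_card_le_card_add_card_stabilizer {a b : G}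
    (ha : a ∈ A) (hb : b ∈ B) :
    ∃ C ⊆ A + B, a + b ∈ C ∧ #A + #B ≤ #C + Nat.card (stabilizer G C) := by
  induction hn : #B using Nat.strong_induction_on generalizing A B with
  | _ n ih =>
  subst hn
  by_cases hsub : ∀ a ∈ A, (a - b) +ᵥ B ⊆ A
  · refine ⟨b +ᵥ A, ?_, ?_, ?_⟩
    · rw [add_comm]
      exact vadd_finset_subset_add hb
    · rw [add_comm]
      exact vadd_mem_vadd_finset ha
    · rw [card_vadd_finset, stabilizer_vadd_eq_right]
      exact Nat.add_le_add_left (card_le_card_stabilizer_of_forall_vadd_subset ⟨a, ha⟩ hsub) _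
  · push Not at hsub
    obtain ⟨a', ha', hnot⟩ := hsub
    set e := a' - b
    have card_eq := addDysonETransform.card e (A, B)
    have snd_lt : #(B ∩ (-e +ᵥ A)) < #B := by
      refine card_lt_card (inter_subset_left.ssubset_of_ne fun heq ↦ hnot ?_)
      rwa [inter_eq_left, ← vadd_finset_subset_iff] at heq
    have hb' : b ∈ B ∩ (-e +ᵥ A) :=
      mem_inter.2 ⟨hb, mem_neg_vadd_finset_iff.2 (by simpa [e] using ha')⟩
    obtain ⟨C, hC, habC, hcard⟩ := ih _ snd_lt (mem_union_left (e +ᵥ B) ha) hb' rfl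
    exact ⟨C, hC.trans (addDysonETransform.subset e (A, B)), habC, card_eq.symm.trans_le hcard⟩

theorem card_add_card_le_card_add_add_card_stabilizer (hA : A.Nonempty) (hB : B.Nonempty) :
    #A + #B ≤ #(A + B) + Nat.card (stabilizer G (A + B)) := by
  have local_bound : ∀ x ∈ A + B, ∃ C ⊆ A + B, x ∈ C ∧
      #A + #B ≤ #C + Nat.card (stabilizer G C) := by
    intro x hx
    obtain ⟨a, ha, b, hb, rfl⟩ := mem_add.1 hx
    exact exists_subset_add_card_add_card_le_card_add_card_stabilizer ha hb
  choose! C hCsub hmem hC using local_bound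
  have cover : (A + B).sup' (hA.add hB) C = A + B :=
    (sup'_le _ _ hCsub).antisymm fun x hx ↦ le_sup' C hx (hmem x hx)
  rw [← cover]
  refine sup'_induction (p := fun D ↦ #A + #B ≤ #D + Nat.card (stabilizer G D)) _ _ ?_ hC
  intro D hD E hE
  have union_bound := le_ncard_union_add_card_stabilizer (n := #A + #B)
    D.finite_toSet E.finite_toSet (by simpa using hD) (by simpa using hE)
  rwa [← coe_union, Set.ncard_coe_finset, stabilizer_coe_finset] at union_bound

theorem card_add_card_le_card_sub_add_card_stabilizer (hA : A.Nonempty) (hB : B.Nonempty) :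
    #A + #B ≤ #(A - B) + Nat.card (stabilizer G (A - B)) := by
  simpa only [card_neg, ← sub_eq_add_neg] using
    card_add_card_le_card_add_add_card_stabilizer hA hB.neg

theorem stmt_17_general (hA : A.Nonempty) (hB : B.Nonempty) (hexc : #(A - B) ≤ #A + #B - 2) :
    ¬ Nat.card (stabilizer G (A - B)) ∣ #A + #B - 1 := by
  intro hdvd
  have kneser := card_add_card_le_card_sub_add_card_stabilizer hA hB
  have stab_dvd : Nat.card (stabilizer G (A - B)) ∣ #(A - B) := by
    rw [← stabilizer_coe_finset, ← Set.ncard_coe_finset]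
    exact card_stabilizer_dvd_ncard _
  have card_A_pos := hA.card_pos
  have card_B_pos := hB.card_pos
  have stab_le : Nat.card (stabilizer G (A - B)) ≤ #A + #B - 1 - #(A - B) :=
    Nat.le_of_dvd (by omega) (Nat.dvd_sub hdvd stab_dvd)
  omega

end Kneser

section ZMod

variable {L : ℕ}

lemma fdiff_eq_sub (A B : Finset (ZMod L)) : fdiff A B = A - B := rfl

lemma coe_stab [NeZero L] (T : Finset (ZMod L)) :
    (stab T : Set (ZMod L)) = stabilizer (ZMod L) T :=
  Set.ext fun h ↦ mem_filter_univ h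

lemma card_stab [NeZero L] (T : Finset (ZMod L)) :
    #(stab T) = Nat.card (stabilizer (ZMod L) T) := by
  rw [← Set.ncard_coe_finset, coe_stab]
  rfl

end ZMod

theorem stmt_17 (L : ℕ) [NeZero L] (A B : Finset (ZMod L))
    (hA : A.Nonempty) (hB : B.Nonempty)
    (hexc : (fdiff A B).card ≤ A.card + B.card - 2) :
    ¬ (stab (fdiff A B)).card ∣ A.card + B.card - 1 := by
  rw [card_stab, fdiff_eq_sub]
  exact stmt_17_general hA hB hexc
end
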